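/- In a matching market with unacceptable partners, the set of matched people is the same in every stable matching: if ν₁ and ν₂ are two stable partial matchings of the incomplete market on E, then exactly the same set of men and the same set of women are matched in ν₁ as in ν₂. -/

import Mathlib

section

variable {Mn Wn : Type*} [Fintype Mn] [Fintype Wn]

/-- `ν` is a partial matching: a set of edges of `E`, no two of which share an endpoint. -/
def IsPartialMatching (E ν : Set (Mn × Wn)) : Prop :=
  ν ⊆ E ∧ ∀ e₁ ∈ ν, ∀ e₂ ∈ ν, (e₁.1 = e₂.1 ∨ e₁.2 = e₂.2) → e₁ = e₂

/-- A pair of `E` blocks `ν`: the man is unmatched or prefers the woman to his partner, and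
the woman is unmatched or prefers the man to her partner.  The incomplete preference profile
is given by strict total orders `prefM m` on the neighborhood of `m` and `prefW w` on the
neighborhood of `w`. -/
def Blocks (E : Set (Mn × Wn))
    (prefM : ∀ m : Mn, {w : Wn // (m, w) ∈ E} → {w : Wn // (m, w) ∈ E} → Prop)
    (prefW : ∀ w : Wn, {m : Mn // (m, w) ∈ E} → {m : Mn // (m, w) ∈ E} → Prop)
    (ν : Set (Mn × Wn)) (m : Mn) (w : Wn) (h : (m, w) ∈ E) : Prop :=
  (∀ w', ∀ h' : (m, w') ∈ E, (m, w') ∈ ν → prefM m ⟨w, h⟩ ⟨w', h'⟩) ∧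
  (∀ m', ∀ h' : (m', w) ∈ E, (m', w) ∈ ν → prefW w ⟨m, h⟩ ⟨m', h'⟩)

/-- `ν` is a stable partial matching of the incomplete market on `E`. -/
def IsStable (E : Set (Mn × Wn))
    (prefM : ∀ m : Mn, {w : Wn // (m, w) ∈ E} → {w : Wn // (m, w) ∈ E} → Prop)
    (prefW : ∀ w : Wn, {m : Mn // (m, w) ∈ E} → {m : Mn // (m, w) ∈ E} → Prop)
    (ν : Set (Mn × Wn)) : Prop :=
  IsPartialMatching E ν ∧ ¬ ∃ m, ∃ w, ∃ h : (m, w) ∈ E, Blocks E prefM prefW ν m w h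

lemma swap_aux {M W : Type*} [Finite M] [Finite W] (μ ν : Set (M × W)) (A : Set M) (B : Set W)
    (hμ : ∀ m m' w, (m, w) ∈ μ → (m', w) ∈ μ → m = m')
    (hν : ∀ m w w', (m, w) ∈ ν → (m, w') ∈ ν → w = w')
    (hA : ∀ m ∈ A, ∃ w ∈ B, (m, w) ∈ μ) (hB : ∀ w ∈ B, ∃ m ∈ A, (m, w) ∈ ν) :
    (∀ m ∈ A, ∃ w ∈ B, (m, w) ∈ ν) ∧ (∀ w ∈ B, ∃ m ∈ A, (m, w) ∈ μ) := by
  choose f hfB hf using fun m : A => hA m.1 m.2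
  choose g hgA hg using fun w : B => hB w.1 w.2
  let F : A → B := fun m => ⟨f m, hfB m⟩
  let G : B → A := fun w => ⟨g w, hgA w⟩
  have hF : Function.Injective F := by
    intro a b hab
    have h : f a = f b := congrArg Subtype.val hab
    have hb := hf b
    rw [← h] at hb
    exact Subtype.ext (hμ _ _ _ (hf a) hb)
  have hG : Function.Injective G := by
    intro a b hab
    have h : g a = g b := congrArg Subtype.val hab
    have hb := hg b
    rw [← h] at hb
    exact Subtype.ext (hν _ _ _ (hg a) hb)
  have hGF := Finite.surjective_of_injective (hG.comp hF)
  have hFG := Finite.surjective_of_injective (hF.comp hG)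
  refine ⟨fun m hm => ?_, fun w hw => ?_⟩
  · obtain ⟨a, ha⟩ := hGF ⟨m, hm⟩
    have h : g (F a) = m := congrArg Subtype.val ha
    exact ⟨F a, (F a).2, h ▸ hg (F a)⟩
  · obtain ⟨a, ha⟩ := hFG ⟨w, hw⟩
    have h : f (G a) = w := congrArg Subtype.val ha
    exact ⟨G a, (G a).2, h ▸ hf (G a)⟩

lemma stable_half {Mn Wn : Type*} [Fintype Mn] [Fintype Wn] (E : Set (Mn × Wn))
    (prefM : ∀ m : Mn, {w : Wn // (m, w) ∈ E} → {w : Wn // (m, w) ∈ E} → Prop)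
    (prefW : ∀ w : Wn, {m : Mn // (m, w) ∈ E} → {m : Mn // (m, w) ∈ E} → Prop)
    (hM : ∀ m, IsStrictTotalOrder _ (prefM m)) (hW : ∀ w, IsStrictTotalOrder _ (prefW w))
    (ν₁ ν₂ : Set (Mn × Wn))
    (h₁ : IsStable E prefM prefW ν₁) (h₂ : IsStable E prefM prefW ν₂) :
    (∀ m : Mn, (∃ w, (m, w) ∈ ν₁) → (∃ w, (m, w) ∈ ν₂)) ∧
    (∀ w : Wn, (∃ m, (m, w) ∈ ν₂) → (∃ m, (m, w) ∈ ν₁)) := by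
  obtain ⟨⟨s₁, u₁⟩, b₁⟩ := h₁
  obtain ⟨⟨s₂, u₂⟩, b₂⟩ := h₂
  have um₁ : ∀ m m' w, (m, w) ∈ ν₁ → (m', w) ∈ ν₁ → m = m' := fun m m' w h h' =>
    congrArg Prod.fst (u₁ _ h _ h' (Or.inr rfl))
  have um₂ : ∀ m m' w, (m, w) ∈ ν₂ → (m', w) ∈ ν₂ → m = m' := fun m m' w h h' =>
    congrArg Prod.fst (u₂ _ h _ h' (Or.inr rfl))
  have uw₁ : ∀ m w w', (m, w) ∈ ν₁ → (m, w') ∈ ν₁ → w = w' := fun m w w' h h' =>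
    congrArg Prod.snd (u₁ _ h _ h' (Or.inl rfl))
  have uw₂ : ∀ m w w', (m, w) ∈ ν₂ → (m, w') ∈ ν₂ → w = w' := fun m w w' h h' =>
    congrArg Prod.snd (u₂ _ h _ h' (Or.inl rfl))
  let A : Set Mn := {m | ∃ w, ∃ h : (m, w) ∈ E, (m, w) ∈ ν₁ ∧
    ∀ w', ∀ h' : (m, w') ∈ E, (m, w') ∈ ν₂ → prefM m ⟨w, h⟩ ⟨w', h'⟩}
  let B : Set Wn := {w | ∃ m, ∃ h : (m, w) ∈ E, (m, w) ∈ ν₂ ∧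
    ∀ m', ∀ h' : (m', w) ∈ E, (m', w) ∈ ν₁ → prefW w ⟨m, h⟩ ⟨m', h'⟩}
  have hA : ∀ m ∈ A, ∃ w ∈ B, (m, w) ∈ ν₁ := by
    rintro m ⟨w, h, hν, hp⟩
    refine ⟨w, ?_, hν⟩
    have hb : ¬ ∀ m', ∀ h' : (m', w) ∈ E, (m', w) ∈ ν₂ → prefW w ⟨m, h⟩ ⟨m', h'⟩ :=
      fun hq => b₂ ⟨m, w, h, hp, hq⟩
    push Not at hb
    obtain ⟨m', h', hν', hn⟩ := hb
    refine ⟨m', h', hν', fun m'' h'' hν'' => ?_⟩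
    obtain rfl := um₁ _ _ _ hν hν''
    haveI := hW w
    haveI := hM m
    rcases trichotomous_of (prefW w) ⟨m, h⟩ ⟨m', h'⟩ with c | c | c
    · exact absurd c hn
    · obtain rfl : m = m' := congrArg Subtype.val c
      exact absurd (hp w h hν') (irrefl_of (prefM m) _)
    · exact c
  have hB : ∀ w ∈ B, ∃ m ∈ A, (m, w) ∈ ν₂ := by
    rintro w ⟨m, h, hν, hp⟩
    refine ⟨m, ?_, hν⟩
    have hb : ¬ ∀ w', ∀ h' : (m, w') ∈ E, (m, w') ∈ ν₁ → prefM m ⟨w, h⟩ ⟨w', h'⟩ :=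
      fun hq => b₁ ⟨m, w, h, hq, hp⟩
    push Not at hb
    obtain ⟨w', h', hν', hn⟩ := hb
    refine ⟨w', h', hν', fun w'' h'' hν'' => ?_⟩
    obtain rfl := uw₂ _ _ _ hν hν''
    haveI := hW w
    haveI := hM m
    rcases trichotomous_of (prefM m) ⟨w, h⟩ ⟨w', h'⟩ with c | c | c
    · exact absurd c hn
    · obtain rfl : w = w' := congrArg Subtype.val c
      exact absurd (hp m h hν') (irrefl_of (prefW w) _)
    · exact c
  obtain ⟨k₁, k₂⟩ := swap_aux ν₁ ν₂ A B um₁ uw₂ hA hB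
  constructor
  · rintro m ⟨w, hw⟩
    by_contra hc
    obtain ⟨w', -, hw'⟩ := k₁ m ⟨w, s₁ hw, hw, fun w' _ hw' => absurd ⟨w', hw'⟩ hc⟩
    exact hc ⟨w', hw'⟩
  · rintro w ⟨m, hm⟩
    by_contra hc
    obtain ⟨m', -, hm'⟩ := k₂ w ⟨m, s₂ hm, hm, fun m' _ hm' => absurd ⟨m', hm'⟩ hc⟩
    exact hc ⟨m', hm'⟩

/-- In a matching market with unacceptable partners, the set of matched people is the same in
every stable matching: if `ν₁` and `ν₂` are stable partial matchings, then the same men and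
the same women are matched in both. -/
theorem stable_same_matched_set (E : Set (Mn × Wn))
    (prefM : ∀ m : Mn, {w : Wn // (m, w) ∈ E} → {w : Wn // (m, w) ∈ E} → Prop)
    (prefW : ∀ w : Wn, {m : Mn // (m, w) ∈ E} → {m : Mn // (m, w) ∈ E} → Prop)
    (hM : ∀ m, IsStrictTotalOrder _ (prefM m)) (hW : ∀ w, IsStrictTotalOrder _ (prefW w))
    (ν₁ ν₂ : Set (Mn × Wn))
    (h₁ : IsStable E prefM prefW ν₁) (h₂ : IsStable E prefM prefW ν₂) :
    (∀ m : Mn, (∃ w, (m, w) ∈ ν₁) ↔ (∃ w, (m, w) ∈ ν₂)) ∧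
    (∀ w : Wn, (∃ m, (m, w) ∈ ν₁) ↔ (∃ m, (m, w) ∈ ν₂)) := by
  obtain ⟨a, b⟩ := stable_half E prefM prefW hM hW ν₁ ν₂ h₁ h₂
  obtain ⟨c, d⟩ := stable_half E prefM prefW hM hW ν₂ ν₁ h₂ h₁
  exact ⟨fun m => ⟨a m, c m⟩, fun w => ⟨d w, b w⟩⟩

end
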